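/- For every n ≥ 8, |det β_n| = 2·|b_n| + |a_n|. -/

import Mathlib

/-!
Expanding `βₙ₊₁` along its first column gives `det βₙ₊₁ = ± det Bₙ`. Write `Dₙ = det Bₙ`; cofactor
expansion gives Narayana's recurrence `Dₙ₊₃ = Dₙ₊₂ + Dₙ`, with characteristic polynomial
`x³ - x² - 1`. The recurrence of `a` and `b` has characteristic polynomial
`x⁴ - x² + x - 1 = (x - 1)(x³ + x² + 1)`, and the roots of the cubic factor are the negatives of
those of `x³ - x² - 1`. For `2bₙ - aₙ` the contribution of the root `1` vanishes, and comparing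
initial values yields `2bₙ₊₁ - aₙ₊₁ = (-1)ⁿ⁺¹ Dₙ`.

The signs alternate: `(-1)ⁿ aₙ` and `(-1)ⁿ bₙ` satisfy `uₙ = uₙ₋₂ + uₙ₋₃ + uₙ₋₄`, so `(-1)ⁿ bₙ ≥ 0`
for all `n` and `(-1)ⁿ aₙ ≤ 0` for `n ≥ 5`. Hence `|2bₙ - aₙ| = 2|bₙ| + |aₙ|` for `n ≥ 5`.
-/

/-- The sequence `a` : `a₁ = a₂ = a₃ = 1`, `a₄ = 0`,
`aₙ = aₙ₋₂ − aₙ₋₃ + aₙ₋₄` for `n ≥ 5` (index 0 is a dummy value). -/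
def aseq : ℕ → ℤ
  | 0 => 1
  | 1 => 1
  | 2 => 1
  | 3 => 1
  | 4 => 0
  | n + 5 => aseq (n + 3) - aseq (n + 2) + aseq (n + 1)

/-- The sequence `b` : `b₁ = 0`, `b₂ = 1`, `b₃ = 0`, `b₄ = 1`,
`bₙ = bₙ₋₂ − bₙ₋₃ + bₙ₋₄` for `n ≥ 5` (index 0 is a dummy value). -/
def bseq : ℕ → ℤ
  | 0 => 0
  | 1 => 0
  | 2 => 1
  | 3 => 0
  | 4 => 1
  | n + 5 => bseq (n + 3) - bseq (n + 2) + bseq (n + 1)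

/-- The matrix `Bₙ ∈ {0,1}^{n×n}` with ones exactly on the main diagonal, the
diagonal above it, and the second diagonal below it. -/
def Bmat (n : ℕ) : Matrix (Fin n) (Fin n) ℤ :=
  Matrix.of fun i j =>
    if (j : ℕ) = (i : ℕ) ∨ (j : ℕ) = (i : ℕ) + 1 ∨ (i : ℕ) = (j : ℕ) + 2 then 1 else 0

/-- The matrix `βₙ ∈ {0,1}^{n×n}`: rows `1..n−1`, columns `2..n` form the block
`Bₙ₋₁`, entry `(n,1)` equals `1`, and all remaining entries are `0`
(here written with 0-based indices). -/
def betaMat (n : ℕ) : Matrix (Fin n) (Fin n) ℤ :=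
  Matrix.of fun i j =>
    if (i : ℕ) = n - 1 then (if (j : ℕ) = 0 then 1 else 0)
    else if (j : ℕ) = 0 then 0
    else if (j : ℕ) = (i : ℕ) + 1 ∨ (j : ℕ) = (i : ℕ) + 2 ∨ (i : ℕ) = (j : ℕ) + 1
      then 1 else 0

/-- Narayana's recurrence: the corner entry contributes `det Bₙ₊₂`, and the only other term of the
expansion comes from the 3-cycle through the first three indices, which is an even permutation. -/
lemma det_Bmat_rec (n : ℕ) :
    (Bmat (n + 3)).det = (Bmat (n + 2)).det + (Bmat n).det := by
  have h00 : (Bmat (n + 3)).submatrix Fin.succ (Fin.succAbove 0) = Bmat (n + 2) := by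
    ext i j
    simp only [Bmat, Matrix.submatrix_apply, Matrix.of_apply, Fin.succAbove_zero, Fin.val_succ]
    congr 1
    apply propext
    omega
  -- the minor left after deleting the first row and the second column
  have h01 : ((Bmat (n + 3)).submatrix Fin.succ (Fin.succAbove (Fin.succ 0))).det
      = -(Bmat n).det := by
    rw [Matrix.det_succ_column_zero, Fin.sum_univ_succ, Fin.sum_univ_succ, Finset.sum_eq_zero]
    · rw [Matrix.det_succ_row_zero (((Bmat (n + 3)).submatrix Fin.succ
          (Fin.succAbove (Fin.succ 0))).submatrix (Fin.succAbove (Fin.succ 0)) Fin.succ),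
        Fin.sum_univ_succ, Finset.sum_eq_zero]
      · have h : ((((Bmat (n + 3)).submatrix Fin.succ (Fin.succAbove (Fin.succ 0))).submatrix
            (Fin.succAbove (Fin.succ 0)) Fin.succ).submatrix Fin.succ (Fin.succAbove 0))
            = Bmat n := by
          ext i j
          simp only [Bmat, Matrix.submatrix_apply, Matrix.of_apply, Fin.succAbove_zero,
            Fin.val_succ, Fin.succ_succAbove_succ]
          congr 1
          apply propext
          omega
        rw [h]
        simp [Bmat]
      · intro j _
        simp [Bmat]
    · intro i _
      simp [Bmat]
  rw [Matrix.det_succ_row_zero, Fin.sum_univ_succ, Fin.sum_univ_succ, Finset.sum_eq_zero,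
    h00, h01]
  · simp [Bmat]
  · intro j _
    simp [Bmat]

lemma det_betaMat_succ (n : ℕ) : (betaMat (n + 1)).det = (-1) ^ n * (Bmat n).det := by
  rw [Matrix.det_succ_column_zero, Finset.sum_eq_single (Fin.last n)]
  · have h : (betaMat (n + 1)).submatrix (Fin.last n).succAbove Fin.succ = Bmat n := by
      ext i j
      have hi : (i : ℕ) ≠ n := i.isLt.ne
      simp only [betaMat, Bmat, Matrix.submatrix_apply, Matrix.of_apply, Fin.succAbove_last,
        Fin.val_succ, Fin.val_castSucc, Nat.add_sub_cancel, if_neg hi, Nat.succ_ne_zero,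
        if_false]
      congr 1
      apply propext
      omega
    rw [h]
    simp [betaMat]
  · intro i _ hi
    have hi' : (i : ℕ) ≠ n := fun h => hi (Fin.ext h)
    simp [betaMat, hi']
  · simp

/-- `2b - a` has no component along the root `1` of the characteristic polynomial, so it satisfies
the third-order recurrence of the remaining factor `x³ + x² + 1`. -/
lemma two_bseq_sub_aseq_rec (n : ℕ) :
    (2 * bseq (n + 4) - aseq (n + 4)) + (2 * bseq (n + 3) - aseq (n + 3))
      + (2 * bseq (n + 1) - aseq (n + 1)) = 0 := by
  induction n with
  | zero => simp [aseq, bseq]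
  | succ n ih =>
    have ha : aseq (n + 5) = aseq (n + 3) - aseq (n + 2) + aseq (n + 1) := by rw [aseq]
    have hb : bseq (n + 5) = bseq (n + 3) - bseq (n + 2) + bseq (n + 1) := by rw [bseq]
    rw [show n + 1 + 4 = n + 5 from rfl, show n + 1 + 3 = n + 4 from rfl,
      show n + 1 + 1 = n + 2 from rfl, ha, hb]
    linarith

lemma two_bseq_sub_aseq (n : ℕ) :
    2 * bseq (n + 1) - aseq (n + 1) = (-1) ^ (n + 1) * (Bmat n).det := by
  induction n using Nat.strong_induction_on with
  | _ n ih =>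
    match n, ih with
    | 0, _ => simp [aseq, bseq]
    | 1, _ => simp [aseq, bseq, Bmat]
    | 2, _ => simp [aseq, bseq, Bmat, Matrix.det_fin_two]
    | n + 3, ih =>
      have h0 := ih n (by omega)
      have h2 := ih (n + 2) (by omega)
      have hr := two_bseq_sub_aseq_rec n
      rw [det_Bmat_rec]
      rw [show n + 2 + 1 = n + 3 from rfl] at h2
      rw [show n + 3 + 1 = n + 4 from rfl]
      rw [h0, h2] at hr
      linear_combination hr

lemma bseq_sign (n : ℕ) : 0 ≤ (-1) ^ n * bseq n := by
  induction n using Nat.strong_induction_on with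
  | _ n ih =>
    match n, ih with
    | 0, _ | 1, _ | 2, _ | 3, _ | 4, _ => simp [bseq]
    | n + 5, ih =>
      have h1 := ih (n + 1) (by omega)
      have h2 := ih (n + 2) (by omega)
      have h3 := ih (n + 3) (by omega)
      rw [bseq]
      ring_nf at h1 h2 h3 ⊢
      linarith

lemma aseq_sign (n : ℕ) : (-1) ^ (n + 5) * aseq (n + 5) ≤ 0 := by
  induction n using Nat.strong_induction_on with
  | _ n ih =>
    match n, ih with
    | 0, _ | 1, _ | 2, _ | 3, _ => simp [aseq]
    | n + 4, ih =>
      have h1 := ih n (by omega)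
      have h2 := ih (n + 1) (by omega)
      have h3 := ih (n + 2) (by omega)
      rw [show n + 4 + 5 = (n + 4) + 5 from rfl, aseq]
      ring_nf at h1 h2 h3 ⊢
      linarith

/-- For every `n ≥ 8`, `|det βₙ| = 2·|bₙ| + |aₙ|`. -/
theorem statement14 (n : ℕ) (hn : 8 ≤ n) :
    |(betaMat n).det| = 2 * |bseq n| + |aseq n| := by
  obtain ⟨m, rfl⟩ : ∃ m, n = m + 5 := ⟨n - 5, by omega⟩
  have h := two_bseq_sub_aseq (m + 4)
  have hb := bseq_sign (m + 5)
  have ha := aseq_sign m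
  rw [show m + 4 + 1 = m + 5 from rfl] at h
  have hdet : |(betaMat (m + 5)).det| = |2 * bseq (m + 5) - aseq (m + 5)| := by
    rw [det_betaMat_succ, h, abs_mul, abs_mul]
    simp
  rw [hdet]
  rcases neg_one_pow_eq_or ℤ (m + 5) with e | e
  · rw [e] at ha hb
    rw [abs_of_nonneg (a := bseq _) (by linarith), abs_of_nonpos (a := aseq _) (by linarith),
      abs_of_nonneg (by linarith)]
    ring
  · rw [e] at ha hb
    rw [abs_of_nonpos (a := bseq _) (by linarith), abs_of_nonneg (a := aseq _) (by linarith),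
      abs_of_nonpos (by linarith)]
    ring
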